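/- Let φ_(k) and φ_(k') be intermittent shear profiles built from a smooth φ: ℝ → ℝ supported in [−1,1], with the same parameters r ∈ (0,1), λ ≥ r^{−1} with rλ ∈ ℕ, and integer N ≥ 1, associated to two non-parallel unit vectors k, k' with Nk, Nk' ∈ ℤ³. Then for every M ∈ ℕ and every p ∈ [1, ∞] there is a constant C, depending only on φ, M, p, N, k and k', such that ‖∇^M (φ_(k) φ_(k'))‖_{L^p(T³)} ≤ C λ^M r^{2/p − 1} (with the convention 1/∞ = 0). -/

import Mathlib

/-!
STATEMENT 8: Product estimate for two intermittent shear profiles with non-parallel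
directions: ‖∇^M (φ_(k) φ_(k'))‖_{L^p(T³)} ≤ C λ^M r^{2/p − 1},
with C = C(φ, M, p, N, k, k') independent of r, λ.
-/

noncomputable section

open MeasureTheory Real
open scoped ENNReal

/-- The fundamental domain [−π,π]³ of the torus T³. -/
def dom : Set (Fin 3 → ℝ) := Set.Icc (fun _ => -π) (fun _ => π)

/-- The 2π-periodization of the rescaled profile r^{−1/2} φ(·/r). -/
def periodize (r : ℝ) (φ : ℝ → ℝ) (y : ℝ) : ℝ :=
  ∑' n : ℤ, (Real.sqrt r)⁻¹ * φ ((y + 2 * π * (n : ℝ)) / r)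

/-- The intermittent shear profile φ_(k)(x) = φ_r(λ r N k·x). -/
def shear (φ : ℝ → ℝ) (r lam : ℝ) (N : ℕ) (k : Fin 3 → ℝ) (x : Fin 3 → ℝ) : ℝ :=
  periodize r φ (lam * r * (N : ℝ) * ∑ i, k i * x i)

/-!
Since `r < π`, near each point `periodize r φ` is a single rescaled bump. So a derivative of
`x ↦ periodize r φ (λ r ℓ(x))` costs a factor `λ`, and all of them vanish unless `λ r ℓ(x)` lies
in `[-r, r] + 2πℤ`. Linearly independent forms `ℓ₁, …, ℓ_d` are coordinates of a linear surjection
onto `ℝ^d`, which pushes the Haar measure of a bounded set forward to at most a constant multiple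
of Lebesgue measure; as `λ r ≥ 1`, the condition in each coordinate has density `O(r)`, and the set
where all factors are active has measure `O(r^d)`. On it the `M`-th derivative of the product is
`O(λ^M r^{-d/2})`, which gives `r^{d/p - d/2}` in `L^p`; the theorem is the case `d = 2`.
-/

section Periodization

variable {φ : ℝ → ℝ} {r : ℝ}

/-- The closed `r`-neighbourhood `[-r, r] + 2πℤ` of the period lattice, which carries
`periodize r φ` when `φ` is supported in `[-1, 1]`. -/
def periodicBand (r : ℝ) : Set ℝ :=
  {y | ∃ n : ℤ, |y + 2 * π * n| ≤ r}

lemma exists_int_abs_add_two_pi_mul_le (y : ℝ) : ∃ n : ℤ, |y + 2 * π * n| ≤ π := by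
  refine ⟨-round (y / (2 * π)), ?_⟩
  have hfactor : y + 2 * π * ((-round (y / (2 * π)) : ℤ) : ℝ)
      = 2 * π * (y / (2 * π) - round (y / (2 * π))) := by
    push_cast
    field_simp
    ring
  rw [hfactor, abs_mul, abs_of_pos two_pi_pos]
  nlinarith [abs_sub_round (y / (2 * π)), pi_pos]

lemma eq_zero_of_lt_abs (hφ : Function.support φ ⊆ Set.Icc (-1) 1) {t : ℝ} (ht : 1 < |t|) :
    φ t = 0 :=
  Function.notMem_support.mp fun h => ht.not_ge (abs_le.mpr (hφ h))

lemma periodize_eventuallyEq (hφ : Function.support φ ⊆ Set.Icc (-1) 1) (hr : 0 < r)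
    (hrπ : r < π) {y₀ : ℝ} {n : ℤ} (hn : |y₀ + 2 * π * n| ≤ π) :
    periodize r φ =ᶠ[nhds y₀] fun y => (√r)⁻¹ * φ ((y + 2 * π * n) / r) := by
  filter_upwards [Metric.ball_mem_nhds y₀ (sub_pos.mpr hrπ)] with y hy
  rw [Metric.mem_ball, Real.dist_eq] at hy
  refine tsum_eq_single n fun m hmn => ?_
  have hperiod : 2 * π ≤ |2 * π * (m : ℝ) - 2 * π * n| := by
    rw [← mul_sub, abs_mul, abs_of_pos two_pi_pos]
    refine le_mul_of_one_le_right two_pi_pos.le ?_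
    exact_mod_cast Int.one_le_abs (sub_ne_zero.mpr hmn)
  have hfar : r < |y + 2 * π * m| := by
    have htri : |2 * π * (m : ℝ) - 2 * π * n|
        ≤ |y + 2 * π * m| + |y - y₀| + |y₀ + 2 * π * n| := by
      rw [show 2 * π * (m : ℝ) - 2 * π * n
        = (y + 2 * π * m) - (y - y₀) - (y₀ + 2 * π * n) by ring]
      exact (abs_sub _ _).trans (add_le_add_left (abs_sub _ _) _)
    linarith
  rw [eq_zero_of_lt_abs hφ, mul_zero]
  rwa [abs_div, abs_of_pos hr, one_lt_div hr]

lemma contDiff_periodize {M : ℕ} (hφ : ContDiff ℝ M φ)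
    (hsupp : Function.support φ ⊆ Set.Icc (-1) 1) (hr : 0 < r) (hrπ : r < π) :
    ContDiff ℝ M (periodize r φ) := by
  refine contDiff_iff_contDiffAt.mpr fun y₀ => ?_
  obtain ⟨n, hn⟩ := exists_int_abs_add_two_pi_mul_le y₀
  refine ContDiffAt.congr_of_eventuallyEq ?_ (periodize_eventuallyEq hsupp hr hrπ hn)
  fun_prop

lemma support_iteratedDeriv_subset_of_isClosed {s : Set ℝ} (hs : IsClosed s)
    (hφ : Function.support φ ⊆ s) (j : ℕ) : Function.support (iteratedDeriv j φ) ⊆ s := by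
  induction j with
  | zero => rwa [iteratedDeriv_zero]
  | succ j ih =>
    rw [iteratedDeriv_succ]
    exact support_deriv_subset.trans (closure_minimal ih hs)

lemma deriv_periodize (hφ : Function.support φ ⊆ Set.Icc (-1) 1) (hr : 0 < r) (hrπ : r < π) :
    deriv (periodize r φ) = fun y => r⁻¹ * periodize r (deriv φ) y := by
  funext y₀
  obtain ⟨n, hn⟩ := exists_int_abs_add_two_pi_mul_le y₀
  have hφ' : Function.support (deriv φ) ⊆ Set.Icc (-1) 1 :=
    support_deriv_subset.trans (closure_minimal hφ isClosed_Icc)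
  have hrescale : (fun y => φ ((y + 2 * π * n) / r)) = fun y => φ (r⁻¹ * (y + 2 * π * n)) := by
    funext y
    rw [div_eq_inv_mul]
  rw [(periodize_eventuallyEq hφ hr hrπ hn).deriv_eq,
    (periodize_eventuallyEq hφ' hr hrπ hn).eq_of_nhds, deriv_const_mul_field, hrescale,
    deriv_comp_add_const (fun t => φ (r⁻¹ * t)), deriv_comp_mul_left, smul_eq_mul,
    div_eq_inv_mul]
  ring

lemma iteratedDeriv_periodize (hφ : Function.support φ ⊆ Set.Icc (-1) 1) (hr : 0 < r)
    (hrπ : r < π) (j : ℕ) :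
    iteratedDeriv j (periodize r φ) = fun y => r⁻¹ ^ j * periodize r (iteratedDeriv j φ) y := by
  induction j with
  | zero => simp only [iteratedDeriv_zero, pow_zero, one_mul]
  | succ j ih =>
    have hφj := support_iteratedDeriv_subset_of_isClosed isClosed_Icc hφ j
    funext y
    rw [iteratedDeriv_succ, ih, deriv_const_mul_field, deriv_periodize hφj hr hrπ,
      ← iteratedDeriv_succ, pow_succ, mul_assoc]

lemma norm_periodize_le_indicator (hφ : Function.support φ ⊆ Set.Icc (-1) 1) (hr : 0 < r)
    (hrπ : r < π) {B : ℝ} (hB : ∀ t, ‖φ t‖ ≤ B) (y : ℝ) :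
    ‖periodize r φ y‖ ≤ (periodicBand r).indicator (fun _ => (√r)⁻¹ * B) y := by
  obtain ⟨n, hn⟩ := exists_int_abs_add_two_pi_mul_le y
  rw [(periodize_eventuallyEq hφ hr hrπ hn).eq_of_nhds, norm_mul,
    Real.norm_of_nonneg (by positivity)]
  by_cases hy : y ∈ periodicBand r
  · rw [Set.indicator_of_mem hy]
    exact mul_le_mul_of_nonneg_left (hB _) (by positivity)
  · have hfar : r < |y + 2 * π * n| := lt_of_not_ge fun h => hy ⟨n, h⟩
    rw [Set.indicator_of_notMem hy, eq_zero_of_lt_abs hφ, norm_zero, mul_zero]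
    rwa [abs_div, abs_of_pos hr, one_lt_div hr]

lemma exists_forall_norm_iteratedDeriv_le {M : ℕ} (hφ : ContDiff ℝ M φ)
    (hsupp : HasCompactSupport φ) : ∃ B : ℝ, 0 < B ∧ ∀ j ≤ M, ∀ t, ‖iteratedDeriv j φ t‖ ≤ B := by
  have hbound : ∀ j ≤ M, ∃ B, ∀ t, ‖iteratedFDeriv ℝ j φ t‖ ≤ B := fun j hj =>
    (hsupp.iteratedFDeriv j).exists_bound_of_continuous
      (hφ.continuous_iteratedFDeriv (by exact_mod_cast hj))
  choose! b hb using hbound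
  have hb0 : ∀ j ∈ Finset.range (M + 1), 0 ≤ b j := fun j hj =>
    (norm_nonneg _).trans (hb j (Finset.mem_range_succ_iff.mp hj) 0)
  refine ⟨1 + ∑ j ∈ Finset.range (M + 1), b j,
    add_pos_of_pos_of_nonneg one_pos (Finset.sum_nonneg hb0), fun j hj t => ?_⟩
  rw [← norm_iteratedFDeriv_eq_norm_iteratedDeriv]
  linarith [hb j hj t, Finset.single_le_sum hb0 (Finset.mem_range_succ_iff.mpr hj)]

lemma exists_norm_iteratedDeriv_periodize_le {M : ℕ} (hφ : ContDiff ℝ M φ)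
    (hsupp : Function.support φ ⊆ Set.Icc (-1) 1) :
    ∃ B : ℝ, 0 < B ∧ ∀ r : ℝ, 0 < r → r < π → ∀ j ≤ M, ∀ y,
      ‖iteratedDeriv j (periodize r φ) y‖
        ≤ (periodicBand r).indicator (fun _ => (√r)⁻¹ * B) y * r⁻¹ ^ j := by
  obtain ⟨B, hB0, hB⟩ := exists_forall_norm_iteratedDeriv_le hφ
    (HasCompactSupport.of_support_subset_isCompact isCompact_Icc hsupp)
  refine ⟨B, hB0, fun r hr hrπ j hj y => ?_⟩
  have hsupp_j := support_iteratedDeriv_subset_of_isClosed isClosed_Icc hsupp j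
  rw [iteratedDeriv_periodize hsupp hr hrπ, norm_mul, Real.norm_of_nonneg (by positivity),
    mul_comm]
  gcongr
  exact norm_periodize_le_indicator hsupp_j hr hrπ (hB j hj) y

end Periodization

section Derivatives

variable {E F : Type*} [NormedAddCommGroup E] [NormedAddCommGroup F]

lemma norm_iteratedFDeriv_comp_clm_le {𝕜 G : Type*} [NontriviallyNormedField 𝕜]
    [NormedSpace 𝕜 E] [NormedSpace 𝕜 F] [NormedAddCommGroup G] [NormedSpace 𝕜 G]
    {f : F → G} {j : ℕ} (hf : ContDiff 𝕜 j f) (L : E →L[𝕜] F) (x : E) :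
    ‖iteratedFDeriv 𝕜 j (f ∘ L) x‖ ≤ ‖iteratedFDeriv 𝕜 j f (L x)‖ * ‖L‖ ^ j := by
  rw [L.iteratedFDeriv_comp_right hf x le_rfl]
  simpa only [Finset.prod_const, Finset.card_univ, Fintype.card_fin] using
    ContinuousMultilinearMap.norm_compContinuousLinearMap_le (iteratedFDeriv 𝕜 j f (L x))
      fun _ => L

variable {𝕜 A : Type*} [NontriviallyNormedField 𝕜] [NormedSpace 𝕜 E]

lemma norm_iteratedFDeriv_mul_le_mul_add_pow [NormedRing A] [NormedAlgebra 𝕜 A] {f g : E → A}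
    {x : E} {M : ℕ} {a b c d : ℝ} (hf : ContDiff 𝕜 M f) (hg : ContDiff 𝕜 M g)
    (hfx : ∀ j ≤ M, ‖iteratedFDeriv 𝕜 j f x‖ ≤ a * c ^ j)
    (hgx : ∀ j ≤ M, ‖iteratedFDeriv 𝕜 j g x‖ ≤ b * d ^ j) :
    ‖iteratedFDeriv 𝕜 M (fun y => f y * g y) x‖ ≤ a * b * (c + d) ^ M := by
  calc ‖iteratedFDeriv 𝕜 M (fun y => f y * g y) x‖
      ≤ ∑ j ∈ Finset.range (M + 1), (M.choose j : ℝ) * ‖iteratedFDeriv 𝕜 j f x‖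
          * ‖iteratedFDeriv 𝕜 (M - j) g x‖ := norm_iteratedFDeriv_mul_le hf hg x le_rfl
    _ ≤ ∑ j ∈ Finset.range (M + 1), (M.choose j : ℝ) * (a * c ^ j) * (b * d ^ (M - j)) := by
        refine Finset.sum_le_sum fun j hj => ?_
        have hfj := hfx j (Finset.mem_range_succ_iff.mp hj)
        have hac : 0 ≤ a * c ^ j := (norm_nonneg _).trans hfj
        gcongr
        exact hgx (M - j) (Nat.sub_le M j)
    _ = a * b * (c + d) ^ M := by
        rw [add_pow, Finset.mul_sum]
        exact Finset.sum_congr rfl fun j _ => by ring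

lemma norm_iteratedFDeriv_prod_le_prod_mul_sum_pow {ι : Type*} [NormedCommRing A]
    [NormOneClass A] [NormedAlgebra 𝕜 A] {f : ι → E → A} {x : E} {M : ℕ} {a c : ι → ℝ}
    (s : Finset ι) (hf : ∀ i ∈ s, ContDiff 𝕜 M (f i))
    (hfx : ∀ i ∈ s, ∀ j ≤ M, ‖iteratedFDeriv 𝕜 j (f i) x‖ ≤ a i * c i ^ j) {m : ℕ}
    (hm : m ≤ M) :
    ‖iteratedFDeriv 𝕜 m (fun y => ∏ i ∈ s, f i y) x‖
      ≤ (∏ i ∈ s, a i) * (∑ i ∈ s, c i) ^ m := by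
  induction s using Finset.cons_induction generalizing m with
  | empty =>
    rcases eq_or_ne m 0 with rfl | hm0
    · simp
    · simp [iteratedFDeriv_const_of_ne hm0, hm0]
  | cons i s hi ih =>
    simp only [Finset.prod_cons, Finset.sum_cons]
    have hs : ∀ i ∈ s, ContDiff 𝕜 M (f i) := fun i his => hf i (Finset.mem_cons_of_mem his)
    refine norm_iteratedFDeriv_mul_le_mul_add_pow
      ((hf i (Finset.mem_cons_self i s)).of_le (by exact_mod_cast hm))
      ((contDiff_prod hs).of_le (by exact_mod_cast hm))
      (fun j hj => hfx i (Finset.mem_cons_self i s) j (hj.trans hm)) fun j hj => ?_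
    exact ih hs (fun i his => hfx i (Finset.mem_cons_of_mem his)) (hj.trans hm)

end Derivatives

section Volume

lemma periodicBand_inter_Icc_subset {r S : ℝ} (hrπ : r ≤ π) (hS : 1 ≤ S) :
    periodicBand r ∩ Set.Icc (-S) S ⊆
      ⋃ n ∈ Finset.Icc (-⌊S⌋) ⌊S⌋, Set.Icc (-r - 2 * π * n) (r - 2 * π * n) := by
  rintro y ⟨⟨n, hn⟩, hy⟩
  have hnS : |(n : ℝ)| ≤ S := by
    have htri : 2 * π * |(n : ℝ)| ≤ r + S := by
      calc 2 * π * |(n : ℝ)| = |(y + 2 * π * n) - y| := by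
            rw [add_sub_cancel_left, abs_mul, abs_of_pos two_pi_pos]
        _ ≤ r + S := (abs_sub _ _).trans (add_le_add hn (abs_le.mpr hy))
    nlinarith [pi_gt_three]
  obtain ⟨hn_lower, hn_upper⟩ := abs_le.mp hnS
  simp only [Set.mem_iUnion, Finset.mem_Icc, Set.mem_Icc]
  refine ⟨n, ⟨neg_le.mp (Int.le_floor.mpr ?_), Int.le_floor.mpr hn_upper⟩, ?_, ?_⟩
  · push_cast
    linarith
  · linarith [(abs_le.mp hn).1]
  · linarith [(abs_le.mp hn).2]

lemma volume_periodicBand_inter_Icc_le {r S : ℝ} (hrπ : r ≤ π) (hS : 1 ≤ S) :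
    volume (periodicBand r ∩ Set.Icc (-S) S) ≤ ENNReal.ofReal (6 * S * r) := by
  have hcard : ((Finset.Icc (-⌊S⌋) ⌊S⌋).card : ℝ) ≤ 3 * S := by
    have hfloor : 0 ≤ ⌊S⌋ := Int.floor_nonneg.mpr (zero_le_one.trans hS)
    have hcast : ((Finset.Icc (-⌊S⌋) ⌊S⌋).card : ℤ) = 2 * ⌊S⌋ + 1 := by
      rw [Int.card_Icc]
      omega
    have hcast_real : ((Finset.Icc (-⌊S⌋) ⌊S⌋).card : ℝ) = 2 * ⌊S⌋ + 1 := by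
      exact_mod_cast hcast
    linarith [Int.floor_le S]
  calc volume (periodicBand r ∩ Set.Icc (-S) S)
      ≤ ∑ n ∈ Finset.Icc (-⌊S⌋) ⌊S⌋, volume (Set.Icc (-r - 2 * π * n) (r - 2 * π * n)) :=
        (measure_mono (periodicBand_inter_Icc_subset hrπ hS)).trans
          (measure_biUnion_finset_le _ _)
    _ = (Finset.Icc (-⌊S⌋) ⌊S⌋).card * ENNReal.ofReal (2 * r) := by
        simp only [Real.volume_Icc, sub_sub_sub_cancel_right, sub_neg_eq_add, ← two_mul,
          Finset.sum_const, nsmul_eq_mul]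
    _ ≤ ENNReal.ofReal (3 * S) * ENNReal.ofReal (2 * r) := by
        gcongr
        rw [← ENNReal.ofReal_natCast]
        exact ENNReal.ofReal_le_ofReal hcard
    _ = ENNReal.ofReal (6 * S * r) := by
        rw [← ENNReal.ofReal_mul (by positivity)]
        ring_nf

lemma volume_Icc_inter_preimage_periodicBand_le {r R a : ℝ} (hrπ : r ≤ π) (hR : 1 ≤ R)
    (ha : 1 ≤ a) :
    volume (Set.Icc (-R) R ∩ (a * ·) ⁻¹' periodicBand r) ≤ ENNReal.ofReal (6 * R * r) := by
  have ha0 : 0 < a := one_pos.trans_le ha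
  have hrescale : Set.Icc (-R) R ∩ (a * ·) ⁻¹' periodicBand r
      = (a * ·) ⁻¹' (periodicBand r ∩ Set.Icc (-(a * R)) (a * R)) := by
    ext u
    simp only [Set.mem_inter_iff, Set.mem_preimage, Set.mem_Icc, ← mul_neg,
      mul_le_mul_iff_right₀ ha0, and_comm]
  calc volume (Set.Icc (-R) R ∩ (a * ·) ⁻¹' periodicBand r)
      = ENNReal.ofReal |a⁻¹| * volume (periodicBand r ∩ Set.Icc (-(a * R)) (a * R)) := by
        rw [hrescale, Real.volume_preimage_mul_left ha0.ne']
    _ ≤ ENNReal.ofReal |a⁻¹| * ENNReal.ofReal (6 * (a * R) * r) := by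
        gcongr
        exact volume_periodicBand_inter_Icc_le hrπ (one_le_mul_of_one_le_of_one_le ha hR)
    _ = ENNReal.ofReal (6 * R * r) := by
        rw [← ENNReal.ofReal_mul (abs_nonneg _), abs_of_pos (inv_pos.mpr ha0)]
        congr 1
        field_simp

lemma surjective_pi_of_linearIndependent {K V ι : Type*} [Field K] [AddCommGroup V] [Module K V]
    [Finite ι] {f : ι → Module.Dual K V} (hf : LinearIndependent K f) :
    Function.Surjective (LinearMap.pi f) := by
  have hcoe : LinearIndependent K fun i => ⇑(f i) :=
    hf.map' (LinearMap.ltoFun K V K K) (LinearMap.ker_eq_bot.mpr DFunLike.coe_injective)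
  have hspan := span_flip_eq_top_iff_linearIndependent.mpr hcoe
  have hrange : Set.range (flip fun i => ⇑(f i)) = (LinearMap.pi f).range := rfl
  rwa [hrange, Submodule.span_eq, LinearMap.range_eq_top] at hspan

variable {E : Type*} [NormedAddCommGroup E] [NormedSpace ℝ E] [FiniteDimensional ℝ E]
  [MeasurableSpace E] [BorelSpace E] (μ : Measure E) [μ.IsAddHaarMeasure] {D : Set E}

lemma exists_addHaar_inter_preimage_le {F : Type*} [NormedAddCommGroup F] [NormedSpace ℝ F]
    [FiniteDimensional ℝ F] [MeasurableSpace F] [BorelSpace F] (ν : Measure F)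
    [ν.IsAddHaarMeasure] {L : E →L[ℝ] F} (hL : Function.Surjective L)
    (hD : Bornology.IsBounded D) :
    ∃ C : NNReal, ∀ s : Set F, μ (D ∩ L ⁻¹' s) ≤ C * ν s := by
  obtain ⟨P, hP⟩ := L.ker_closedComplemented_of_finiteDimensional_range
  have hP_range : P.range = ⊤ := LinearMap.range_eq_top.mpr fun z => ⟨z, hP z⟩
  let T : E ≃L[ℝ] F × L.ker := ContinuousLinearMap.equivProdOfSurjectiveOfIsCompl L P
    (LinearMap.range_eq_top.mpr hL) hP_range (LinearMap.isCompl_of_proj hP)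
  let κ : Measure L.ker := Measure.addHaar
  have hPD : κ (P '' D) < ⊤ := (P.lipschitz.isBounded_image hD).measure_lt_top
  have : (μ.map T).IsAddHaarMeasure := T.isAddHaarMeasure_map μ
  let c := Measure.addHaarScalarFactor (μ.map T) (ν.prod κ)
  refine ⟨c * (κ (P '' D)).toNNReal, fun s => ?_⟩
  have hsub : D ∩ L ⁻¹' s ⊆ T ⁻¹' (s ×ˢ (P '' D)) := fun x hx => ⟨hx.2, x, hx.1, rfl⟩
  calc μ (D ∩ L ⁻¹' s) ≤ μ (T ⁻¹' (s ×ˢ (P '' D))) := measure_mono hsub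
    _ = μ.map T (s ×ˢ (P '' D)) :=
        (T.toHomeomorph.toMeasurableEquiv.map_apply _).symm
    _ = c * (ν s * κ (P '' D)) := by
        rw [Measure.isAddLeftInvariant_eq_smul (μ.map T) (ν.prod κ), Measure.smul_apply,
          Measure.prod_prod, ENNReal.smul_def, smul_eq_mul]
    _ = ↑(c * (κ (P '' D)).toNNReal) * ν s := by
        rw [ENNReal.coe_mul, ENNReal.coe_toNNReal hPD.ne]
        ring

variable {ι : Type*} [Fintype ι] {ℓ : ι → E →L[ℝ] ℝ}

lemma exists_addHaar_inter_forall_mem_periodicBand_le (hD : Bornology.IsBounded D)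
    (hℓ : LinearIndependent ℝ ℓ) :
    ∃ V : ℝ, 0 < V ∧ ∀ r a : ℝ, 0 < r → r ≤ π → 1 ≤ a →
      μ (D ∩ ⋂ i, {x | a * ℓ i x ∈ periodicBand r}) ≤ ENNReal.ofReal (V * r ^ Fintype.card ι) := by
  let L : E →L[ℝ] ι → ℝ := ContinuousLinearMap.pi ℓ
  have hL : Function.Surjective L := surjective_pi_of_linearIndependent
    (hℓ.map' (ContinuousLinearMap.coeLM ℝ) (LinearMap.ker_eq_bot.mpr
      ContinuousLinearMap.coe_injective))
  obtain ⟨C, hC⟩ := exists_addHaar_inter_preimage_le μ volume hL hD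
  obtain ⟨R, -, hR⟩ := (L.lipschitz.isBounded_image hD).exists_pos_norm_le
  set R' := max 1 R
  refine ⟨(C + 1) * (6 * R') ^ Fintype.card ι, by positivity, fun r a hr hrπ ha => ?_⟩
  let A : Set ℝ := Set.Icc (-R') R' ∩ (a * ·) ⁻¹' periodicBand r
  have hsub : D ∩ ⋂ i, {x | a * ℓ i x ∈ periodicBand r} ⊆ D ∩ L ⁻¹' Set.univ.pi fun _ => A := by
    rintro x ⟨hxD, hx⟩
    refine ⟨hxD, fun i _ => ⟨abs_le.mp ?_, Set.mem_iInter.mp hx i⟩⟩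
    exact (norm_le_pi_norm (L x) i).trans ((hR _ ⟨x, hxD, rfl⟩).trans (le_max_right 1 R))
  calc μ (D ∩ ⋂ i, {x | a * ℓ i x ∈ periodicBand r})
      ≤ C * volume (Set.univ.pi fun _ : ι => A) := (measure_mono hsub).trans (hC _)
    _ ≤ ENNReal.ofReal (C + 1) * ENNReal.ofReal (6 * R' * r) ^ Fintype.card ι := by
        rw [volume_pi_pi, Finset.prod_const, Finset.card_univ]
        gcongr
        · rw [← ENNReal.ofReal_coe_nnreal]
          exact ENNReal.ofReal_le_ofReal (le_add_of_nonneg_right zero_le_one)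
        · exact volume_Icc_inter_preimage_periodicBand_le hrπ (le_max_left 1 R) ha
    _ = ENNReal.ofReal ((C + 1) * (6 * R') ^ Fintype.card ι * r ^ Fintype.card ι) := by
        rw [← ENNReal.ofReal_pow (by positivity), ← ENNReal.ofReal_mul (by positivity), mul_pow,
          mul_assoc]

end Volume

section Product

variable {E : Type*} [NormedAddCommGroup E] [NormedSpace ℝ E]
  {ι : Type*} [Fintype ι] {ψ : ι → ℝ → ℝ} {M : ℕ}

lemma exists_norm_iteratedFDeriv_periodize_comp_le {φ : ℝ → ℝ} (hφ : ContDiff ℝ M φ)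
    (hsupp : Function.support φ ⊆ Set.Icc (-1) 1) :
    ∃ B : ℝ, 0 < B ∧ ∀ r : ℝ, 0 < r → r < π → ∀ (L : E →L[ℝ] ℝ) x, ∀ j ≤ M,
      ‖iteratedFDeriv ℝ j (periodize r φ ∘ L) x‖
        ≤ (periodicBand r).indicator (fun _ => (√r)⁻¹ * B) (L x) * (r⁻¹ * ‖L‖) ^ j := by
  obtain ⟨B, hB0, hB⟩ := exists_norm_iteratedDeriv_periodize_le hφ hsupp
  refine ⟨B, hB0, fun r hr hrπ L x j hj => ?_⟩
  have hsmooth : ContDiff ℝ j (periodize r φ) :=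
    contDiff_periodize (hφ.of_le (by exact_mod_cast hj)) hsupp hr hrπ
  refine (norm_iteratedFDeriv_comp_clm_le hsmooth L x).trans ?_
  rw [norm_iteratedFDeriv_eq_norm_iteratedDeriv, mul_pow, ← mul_assoc]
  gcongr
  exact hB r hr hrπ j hj _

lemma exists_norm_iteratedFDeriv_prod_periodize_le (hψ : ∀ i, ContDiff ℝ M (ψ i))
    (hsupp : ∀ i, Function.support (ψ i) ⊆ Set.Icc (-1) 1) (ℓ : ι → E →L[ℝ] ℝ) :
    ∃ C : ℝ, 0 < C ∧ ∀ r lam : ℝ, 0 < r → r < π → 0 ≤ lam → ∀ x,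
      ‖iteratedFDeriv ℝ M (fun y => ∏ i, periodize r (ψ i) (lam * r * ℓ i y)) x‖
        ≤ (⋂ i, {x | lam * r * ℓ i x ∈ periodicBand r}).indicator
          (fun _ => C * lam ^ M * (√r)⁻¹ ^ Fintype.card ι) x := by
  choose B hB0 hB using fun i =>
    exists_norm_iteratedFDeriv_periodize_comp_le (E := E) (hψ i) (hsupp i)
  set W : ℝ := 1 + ∑ i, ‖ℓ i‖
  have hBprod : 0 < ∏ i, B i := Finset.prod_pos fun i _ => hB0 i
  refine ⟨(∏ i, B i) * W ^ M, by positivity, fun r lam hr hrπ hlam x => ?_⟩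
  let L (i : ι) : E →L[ℝ] ℝ := (lam * r) • ℓ i
  let S (i : ι) : Set E := {x | lam * r * ℓ i x ∈ periodicBand r}
  have hfactor : ∀ i, ∀ j ≤ M, ‖iteratedFDeriv ℝ j (periodize r (ψ i) ∘ L i) x‖
      ≤ (S i).indicator (fun _ => (√r)⁻¹ * B i) x * (lam * ‖ℓ i‖) ^ j := by
    intro i j hj
    have hLnorm : r⁻¹ * ‖L i‖ = lam * ‖ℓ i‖ := by
      rw [norm_smul, Real.norm_of_nonneg (by positivity)]
      field_simp
    rw [← hLnorm]
    exact hB i r hr hrπ (L i) x j hj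
  have hamplitude : ∏ i, (S i).indicator (fun _ => (√r)⁻¹ * B i) x
      = (⋂ i, S i).indicator (fun _ => (√r)⁻¹ ^ Fintype.card ι * ∏ i, B i) x := by
    rw [prod_indicator_apply]
    simp only [Finset.mem_univ, Set.iInter_true]
    congr 1
    funext _
    rw [Finset.prod_apply, Finset.prod_mul_distrib, Finset.prod_const, Finset.card_univ]
  calc ‖iteratedFDeriv ℝ M (fun y => ∏ i, periodize r (ψ i) (lam * r * ℓ i y)) x‖
      ≤ (∏ i, (S i).indicator (fun _ => (√r)⁻¹ * B i) x) * (∑ i, lam * ‖ℓ i‖) ^ M :=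
        norm_iteratedFDeriv_prod_le_prod_mul_sum_pow Finset.univ
          (fun i _ => (contDiff_periodize (hψ i) (hsupp i) hr hrπ).comp (L i).contDiff)
          (fun i _ => hfactor i) le_rfl
    _ ≤ (∏ i, (S i).indicator (fun _ => (√r)⁻¹ * B i) x) * (lam * W) ^ M := by
        rw [← Finset.mul_sum]
        gcongr
        · exact Finset.prod_nonneg fun i _ =>
            Set.indicator_nonneg (fun _ _ => mul_nonneg (by positivity) (hB0 i).le) x
        · exact le_add_of_nonneg_left zero_le_one
    _ = (⋂ i, S i).indicator
          (fun _ => (∏ i, B i) * W ^ M * lam ^ M * (√r)⁻¹ ^ Fintype.card ι) x := by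
        rw [hamplitude, ← Set.indicator_mul_const]
        congr 1
        funext _
        rw [mul_pow]
        ring

lemma eLpNorm_le_of_norm_le_indicator {α F : Type*} [MeasurableSpace α] [NormedAddCommGroup F]
    {μ : Measure α} {f : α → F} {s : Set α} {K : ℝ} (hK : 0 ≤ K)
    (hf : ∀ x, ‖f x‖ ≤ s.indicator (fun _ => K) x) (p : ℝ≥0∞) :
    eLpNorm f p μ ≤ ENNReal.ofReal K * μ s ^ (1 / p.toReal) := by
  rw [← Real.enorm_of_nonneg hK]
  exact (eLpNorm_mono_real hf).trans (eLpNorm_indicator_const_le K p)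

theorem shear_product_Lp_estimates_general [FiniteDimensional ℝ E] [MeasurableSpace E]
    [BorelSpace E] (μ : Measure E) [μ.IsAddHaarMeasure] {D : Set E}
    (hD : Bornology.IsBounded D) (hψ : ∀ i, ContDiff ℝ M (ψ i))
    (hsupp : ∀ i, Function.support (ψ i) ⊆ Set.Icc (-1) 1) {ℓ : ι → E →L[ℝ] ℝ}
    (hℓ : LinearIndependent ℝ ℓ) {p : ℝ≥0∞} (_hp : p ≠ 0) :
    ∃ C : ℝ, 0 < C ∧ ∀ r lam : ℝ, 0 < r → r < π → r⁻¹ ≤ lam →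
      eLpNorm (iteratedFDeriv ℝ M fun y => ∏ i, periodize r (ψ i) (lam * r * ℓ i y))
          p (μ.restrict D)
        ≤ ENNReal.ofReal
            (C * lam ^ M * r ^ ((Fintype.card ι : ℝ) / p.toReal - Fintype.card ι / 2)) := by
  obtain ⟨C, hC0, hC⟩ := exists_norm_iteratedFDeriv_prod_periodize_le hψ hsupp ℓ
  obtain ⟨R, hDR⟩ := hD.subset_closedBall 0
  obtain ⟨V, hV0, hV⟩ :=
    exists_addHaar_inter_forall_mem_periodicBand_le μ Metric.isBounded_closedBall hℓ
  refine ⟨C * V ^ (1 / p.toReal), by positivity, fun r lam hr hrπ hlam => ?_⟩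
  have hlam0 : 0 < lam := (inv_pos.mpr hr).trans_le hlam
  have hfreq : 1 ≤ lam * r := (inv_le_iff_one_le_mul₀ hr).mp hlam
  set K : ℝ := C * lam ^ M * (√r)⁻¹ ^ Fintype.card ι
  set S : Set E := ⋂ i, {x | lam * r * ℓ i x ∈ periodicBand r}
  have hvolume : μ.restrict D S ≤ ENNReal.ofReal (V * r ^ Fintype.card ι) := by
    refine (Measure.restrict_mono_set μ hDR S).trans ?_
    rw [Measure.restrict_apply' Metric.isClosed_closedBall.measurableSet, Set.inter_comm]
    exact hV r (lam * r) hr hrπ.le hfreq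
  have hpow : (√r)⁻¹ ^ Fintype.card ι * (r ^ Fintype.card ι) ^ (1 / p.toReal)
      = r ^ ((Fintype.card ι : ℝ) / p.toReal - Fintype.card ι / 2) := by
    rw [Real.sqrt_eq_rpow, ← Real.rpow_neg hr.le, ← Real.rpow_natCast, ← Real.rpow_mul hr.le,
      ← Real.rpow_natCast r, ← Real.rpow_mul hr.le, ← Real.rpow_add hr]
    ring_nf
  calc eLpNorm _ p (μ.restrict D) ≤ ENNReal.ofReal K * μ.restrict D S ^ (1 / p.toReal) :=
        eLpNorm_le_of_norm_le_indicator (by positivity) (hC r lam hr hrπ hlam0.le) p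
    _ ≤ ENNReal.ofReal K * ENNReal.ofReal (V * r ^ Fintype.card ι) ^ (1 / p.toReal) := by gcongr
    _ = ENNReal.ofReal (K * (V ^ (1 / p.toReal) * (r ^ Fintype.card ι) ^ (1 / p.toReal))) := by
        rw [ENNReal.ofReal_rpow_of_nonneg (by positivity) (by positivity),
          ← ENNReal.ofReal_mul (by positivity), Real.mul_rpow hV0.le (by positivity)]
    _ = _ := by
        rw [← hpow]
        congr 1
        ring

end Product

/-- The map `k ↦ (x ↦ N k·x)`. The factor `N` is included so that `shear φ r lam N k` depends on
`N` and `k` only through this linear form. -/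
def waveForm (N : ℕ) : (Fin 3 → ℝ) →ₗ[ℝ] (Fin 3 → ℝ) →L[ℝ] ℝ :=
  (N : ℝ) • ((dotProductEquiv ℝ (Fin 3)).trans LinearMap.toContinuousLinearMap).toLinearMap

lemma shear_eq_periodize_waveForm (φ : ℝ → ℝ) (r lam : ℝ) (N : ℕ) (k x : Fin 3 → ℝ) :
    shear φ r lam N k x = periodize r φ (lam * r * waveForm N k x) := by
  rw [shear, mul_assoc _ (N : ℝ)]
  rfl

lemma waveForm_injective {N : ℕ} (hN : N ≠ 0) : Function.Injective (waveForm N) :=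
  (smul_right_injective _ (Nat.cast_ne_zero.mpr hN : (N : ℝ) ≠ 0)).comp (LinearEquiv.injective _)

lemma linearIndependent_waveForm_pair {N : ℕ} (hN : N ≠ 0) {k k' : Fin 3 → ℝ} (hk : k ≠ 0)
    (hnonpar : ∀ c : ℝ, k' ≠ c • k) : LinearIndependent ℝ (waveForm N ∘ ![k, k']) :=
  ((LinearIndependent.pair_iff' hk).mpr fun c => (hnonpar c).symm).map' (waveForm N)
    (LinearMap.ker_eq_bot.mpr (waveForm_injective hN))

lemma isBounded_dom : Bornology.IsBounded dom :=
  Metric.isBounded_Icc _ _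

theorem shear_product_Lp_estimates
    (φ : ℝ → ℝ) (hφ : ContDiff ℝ (⊤ : ℕ∞) φ)
    (hφsupp : Function.support φ ⊆ Set.Icc (-1 : ℝ) 1)
    (N : ℕ) (hN : 1 ≤ N)
    (k k' : Fin 3 → ℝ) (hk : ∑ i, k i ^ 2 = 1) (hk' : ∑ i, k' i ^ 2 = 1)
    (hkZ : ∀ i, ∃ z : ℤ, (N : ℝ) * k i = (z : ℝ))
    (hk'Z : ∀ i, ∃ z : ℤ, (N : ℝ) * k' i = (z : ℝ))
    (hnonpar : ∀ c : ℝ, k' ≠ c • k)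
    (M : ℕ) (p : ℝ≥0∞) (hp : 1 ≤ p) :
    ∃ C : ℝ, 0 < C ∧
      ∀ r lam : ℝ, 0 < r → r < 1 → r⁻¹ ≤ lam → (∃ m : ℕ, r * lam = (m : ℝ)) →
        eLpNorm
            (fun x =>
              ‖iteratedFDeriv ℝ M (fun y => shear φ r lam N k y * shear φ r lam N k' y) x‖)
            p (volume.restrict dom)
          ≤ ENNReal.ofReal (C * lam ^ M * r ^ ((2 : ℝ) / p.toReal - 1)) := by
  have hk0 : k ≠ 0 := by
    rintro rfl
    simp at hk
  obtain ⟨C, hC0, hC⟩ := shear_product_Lp_estimates_general volume isBounded_dom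
    (ψ := fun _ => φ) (M := M) (fun _ => hφ.of_le (by exact_mod_cast le_top)) (fun _ => hφsupp)
    (linearIndependent_waveForm_pair (Nat.one_le_iff_ne_zero.mp hN) hk0 hnonpar)
    (one_pos.trans_le hp).ne'
  refine ⟨C, hC0, fun r lam hr hr1 hlam _ => ?_⟩
  simpa [eLpNorm_norm, shear_eq_periodize_waveForm] using
    hC r lam hr (by linarith [pi_gt_three]) hlam

end
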